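/- arXiv:2404.04822 — 2 statements merged into one kernel-verified Lean document; each statement's English description precedes it below -/
import Mathlib

section
/- The generalized Top Trading Cycles rule TTC fails drop strategy-proofness on the responsive domain: in the reallocation problem with N = {1,2,3}, O = {a,b,c,d}, and endowment ω = ({a,b}, {c}, {d}), there exist a responsive profile P and a drop strategy P'_1 ∈ ℛ_1 for P_1 such that TTC_1(P'_1, P_{-1}) P_1 TTC_1(P). -/
attribute [local instance] Classical.propDecidable

namespace Realloc

/-- A strict preference over bundles: a strict total order on `Finset O`. -/
structure Pref (O : Type) : Type where
  strict : Finset O → Finset O → Prop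
  total : ∀ X Y : Finset O, strict X Y ∨ X = Y ∨ strict Y X
  irrefl : ∀ X : Finset O, ¬ strict X X
  trans : ∀ X Y Z : Finset O, strict X Y → strict Y Z → strict X Z

/-- The weak ("at least as good as") relation associated with a strict preference. -/
def Pref.weak {O : Type} (p : Pref O) (X Y : Finset O) : Prop :=
  p.strict X Y ∨ X = Y

/-- An allocation: nonempty pairwise disjoint bundles whose union is all of `O`. -/
structure Allocation (N O : Type) : Type where
  bundle : N → Finset O
  nonempty : ∀ i : N, (bundle i).Nonempty
  disj : ∀ i j : N, i ≠ j → ∀ o : O, o ∈ bundle i → o ∉ bundle j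
  cover : ∀ o : O, ∃ i : N, o ∈ bundle i

variable {N O : Type}

/-- Two preferences induce the same marginal (singleton) ranking over objects. -/
def MargEq (p q : Pref O) : Prop :=
  ∀ x y : O, p.strict {x} {y} ↔ q.strict {x} {y}

/-- Responsive preferences. -/
def Responsive [DecidableEq O] (p : Pref O) : Prop :=
  ∀ (X : Finset O) (y z : O), y ∉ X → z ∉ X →
    (p.strict (insert y X) (insert z X) ↔ p.strict {y} {z})

/-- Lexicographic preferences: `X` is preferred to `Y` iff the best object of the
symmetric difference belongs to `X`. -/
def Lexicographic [DecidableEq O] (p : Pref O) : Prop :=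
  ∀ X Y : Finset O, X ≠ Y →
    (p.strict X Y ↔
      ∃ x ∈ X \ Y, ∀ y ∈ (X \ Y) ∪ (Y \ X), y ≠ x → p.strict {x} {y})

/-- Conditionally lexicographic preferences. -/
def CondLex [DecidableEq O] (p : Pref O) : Prop :=
  ∀ X Y : Finset O, Disjoint X Y → X.Nonempty →
    ∃! x : O, x ∈ X ∧ ∀ Z : Finset O, Z ⊆ X.erase x → p.strict (insert x Y) (Y ∪ Z)

/-- Monotonic preferences. -/
def Monot (p : Pref O) : Prop :=
  ∀ X Y : Finset O, Y ⊆ X → p.weak X Y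

/-- `p'` is a subset-drop strategy for `p` (relative to endowment `ωi`):
some set `X ⊆ O ∖ ωi` is moved to the bottom of the marginal ranking, preserving
the relative marginal order within `X` and within its complement. -/
def SubsetDropStrategy (ωi : Finset O) (p p' : Pref O) : Prop :=
  ∃ X : Set O, (∀ x ∈ X, x ∉ ωi) ∧
    (∀ x ∈ X, ∀ y ∈ X, (p.strict {x} {y} ↔ p'.strict {x} {y})) ∧
    (∀ x ∉ X, ∀ y ∉ X, (p.strict {x} {y} ↔ p'.strict {x} {y})) ∧
    (∀ x ∈ X, ∀ y ∉ X, p'.strict {y} {x})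

/-- `p'` is a drop strategy for `p`: a single object `x ∉ ωi` is moved to the bottom. -/
def DropStrategy (ωi : Finset O) (p p' : Pref O) : Prop :=
  ∃ x : O, x ∉ ωi ∧
    (∀ u v : O, u ≠ x → v ≠ x → (p.strict {u} {v} ↔ p'.strict {u} {v})) ∧
    (∀ y : O, y ≠ x → p'.strict {y} {x})

/-- `p'` is a truncation strategy for `p`: the tail set
`{o ∈ O ∖ ωi : {x} R {o}}` (for some object `x`) is moved to the bottom. -/
def TruncationStrategy (ωi : Finset O) (p p' : Pref O) : Prop :=
  ∃ x : O,
    (∀ u v : O, (u ∉ ωi ∧ p.weak {x} {u}) → (v ∉ ωi ∧ p.weak {x} {v}) →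
      (p.strict {u} {v} ↔ p'.strict {u} {v})) ∧
    (∀ u v : O, ¬(u ∉ ωi ∧ p.weak {x} {u}) → ¬(v ∉ ωi ∧ p.weak {x} {v}) →
      (p.strict {u} {v} ↔ p'.strict {u} {v})) ∧
    (∀ u v : O, (u ∉ ωi ∧ p.weak {x} {u}) → ¬(v ∉ ωi ∧ p.weak {x} {v}) →
      p'.strict {v} {u})

/-- There is a Pareto-improving trading cycle at the assignment `μ`:
a cyclic sequence of `k+1 ≥ 1` distinct objects and distinct agents, each object owned
(at `μ`) by its agent, such that every agent on the cycle strictly gains by swapping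
the object she relinquishes for the object she points to. -/
def ParetoImprovingCycleAt [DecidableEq O] (pref : N → Pref O) (μ : N → Finset O) : Prop :=
  ∃ (k : ℕ) (obj : Fin (k + 1) → O) (ag : Fin (k + 1) → N),
    Function.Injective obj ∧ Function.Injective ag ∧
    (∀ ℓ : Fin (k + 1), obj ℓ ∈ μ (ag ℓ)) ∧
    (∀ ℓ : Fin (k + 1),
      (pref (ag ℓ)).strict ((insert (obj (ℓ + 1)) (μ (ag ℓ))).erase (obj ℓ)) (μ (ag ℓ)))

/-- Individual-good efficiency of an assignment at a profile. -/
def IGEat [DecidableEq O] (pref : N → Pref O) (μ : N → Finset O) : Prop :=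
  ¬ ParetoImprovingCycleAt pref μ

/-- `ν` Pareto dominates `μ` at the profile `pref`. -/
def ParetoDominates (pref : N → Pref O) (ν μ : N → Finset O) : Prop :=
  (∀ i, (pref i).weak (ν i) (μ i)) ∧ ∃ j, (pref j).strict (ν j) (μ j)

/-- Pareto efficiency of an assignment at a profile. -/
def ParetoEffAt (pref : N → Pref O) (μ : N → Finset O) : Prop :=
  ∀ ν : Allocation N O, ¬ ParetoDominates pref ν.bundle μ

/-- The marginally most-preferred object of a (nonempty) finite set of objects. -/
noncomputable def Pref.best [Nonempty O] (p : Pref O) (S : Finset O) : O :=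
  if h : ∃ x : O, x ∈ S ∧ ∀ y ∈ S, p.weak {x} {y} then h.choose
  else Classical.arbitrary O

/-- The conditionally most-preferred object of `S` given the already-held bundle `Y`. -/
noncomputable def Pref.cbest [Nonempty O] [DecidableEq O] (p : Pref O) (S Y : Finset O) : O :=
  if h : ∃ x : O, x ∈ S ∧ ∀ Z : Finset O, Z ⊆ S.erase x → p.strict (insert x Y) (Y ∪ Z)
  then h.choose else Classical.arbitrary O

/-- The initial owner of an object. -/
noncomputable def Allocation.owner (ω : Allocation N O) (o : O) : N :=
  (ω.cover o).choose

/-- One pass of the generalized TTC algorithm, with fuel.  At each step every agent points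
to her marginally best remaining object and every remaining object points to its owner;
the objects lying on cycles of this functional graph (the periodic points of `g`) are
traded: the owner of a cycling object receives the object she points to. -/
noncomputable def TTCaux [Nonempty O] [DecidableEq O] (pref : N → Pref O) (own : O → N) :
    ℕ → Finset O → N → Finset O
  | 0, _, _ => ∅
  | fuel + 1, S, i =>
      let g : O → O := fun o => (pref (own o)).best S
      let C : Finset O := S.filter fun o => ∃ k : ℕ, 0 < k ∧ g^[k] o = o
      if S.Nonempty then
        ((C.filter fun o => own o = i).image g) ∪ TTCaux pref own fuel (S \ C) i
      else ∅

/-- The generalized Top Trading Cycles rule: the bundle received by agent `i`. -/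
noncomputable def TTC [Fintype O] [Nonempty O] [DecidableEq O]
    (pref : N → Pref O) (ω : Allocation N O) (i : N) : Finset O :=
  TTCaux pref ω.owner (Fintype.card O + 1) Finset.univ i

/-- One pass of the Augmented TTC algorithm, with fuel: agents point to their
conditionally most-preferred remaining object given the bundle assigned so far. -/
noncomputable def ATTCaux [Nonempty O] [DecidableEq O] (pref : N → Pref O) (own : O → N) :
    ℕ → Finset O → (N → Finset O) → N → Finset O
  | 0, _, μ => μ
  | fuel + 1, S, μ =>
      let g : O → O := fun o => (pref (own o)).cbest S (μ (own o))
      let C : Finset O := S.filter fun o => ∃ k : ℕ, 0 < k ∧ g^[k] o = o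
      if S.Nonempty then
        ATTCaux pref own fuel (S \ C) (fun j => μ j ∪ ((C.filter fun o => own o = j).image g))
      else μ

/-- The Augmented Top Trading Cycles rule: the bundle received by agent `i`. -/
noncomputable def ATTC [Fintype O] [Nonempty O] [DecidableEq O]
    (pref : N → Pref O) (ω : Allocation N O) (i : N) : Finset O :=
  ATTCaux pref ω.owner (Fintype.card O + 1) Finset.univ (fun _ => ∅) i

/-- Conditional marginal preference of `p` given the bundle `Y`:
`x` is conditionally better than `y`. -/
def CMarg [DecidableEq O] (p : Pref O) (Y : Finset O) (x y : O) : Prop :=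
  p.strict ((insert x Y).erase y) ((insert y Y).erase x)

/-- Weak conditional marginal preference. -/
def CMargWeak [DecidableEq O] (p : Pref O) (Y : Finset O) (x y : O) : Prop :=
  CMarg p Y x y ∨ x = y

/-- Drop strategy on the conditionally lexicographic domain: `x ∉ ωi` becomes the worst,
with preferences over bundles avoiding `x` unchanged. -/
def DropStrategyCL (ωi : Finset O) (p p' : Pref O) : Prop :=
  ∃ x : O, x ∉ ωi ∧
    (∀ Y : Finset O, Y.Nonempty → x ∉ Y → p'.strict Y {x}) ∧
    (∀ Y Z : Finset O, x ∉ Y → x ∉ Z → (p'.strict Y Z ↔ p.strict Y Z))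

section Rules

variable [DecidableEq O]

/-- Balancedness of a rule on the domain `D`. -/
def RBAL (D : Pref O → Prop) (ω : Allocation N O)
    (φ : (N → Pref O) → Allocation N O) : Prop :=
  ∀ P : N → Pref O, (∀ i, D (P i)) → ∀ i, ((φ P).bundle i).card = (ω.bundle i).card

/-- Individual-good efficiency of a rule on the domain `D`. -/
def RIGE (D : Pref O → Prop) (φ : (N → Pref O) → Allocation N O) : Prop :=
  ∀ P : N → Pref O, (∀ i, D (P i)) → IGEat P ((φ P).bundle)

/-- Pareto efficiency of a rule on the domain `D`. -/
def RPE (D : Pref O → Prop) (φ : (N → Pref O) → Allocation N O) : Prop :=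
  ∀ P : N → Pref O, (∀ i, D (P i)) → ParetoEffAt P ((φ P).bundle)

/-- Individual rationality of a rule on the domain `D`. -/
def RIR (D : Pref O → Prop) (ω : Allocation N O)
    (φ : (N → Pref O) → Allocation N O) : Prop :=
  ∀ P : N → Pref O, (∀ i, D (P i)) → ∀ i, (P i).weak ((φ P).bundle i) (ω.bundle i)

/-- The worst-endowment lower bound of a rule on the domain `D`: no agent receives an
object marginally worse than the marginally worst object of her endowment. -/
def RWELB (D : Pref O → Prop) (ω : Allocation N O)
    (φ : (N → Pref O) → Allocation N O) : Prop :=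
  ∀ P : N → Pref O, (∀ i, D (P i)) → ∀ i, ∀ o ∈ (φ P).bundle i,
    ∀ w ∈ ω.bundle i, (∀ y ∈ ω.bundle i, (P i).weak {y} {w}) → (P i).weak {o} {w}

/-- Marginality of a rule on the domain `D`. -/
def RMAR (D : Pref O → Prop) (φ : (N → Pref O) → Allocation N O) : Prop :=
  ∀ P P' : N → Pref O, (∀ i, D (P i)) → (∀ i, D (P' i)) →
    (∀ i, MargEq (P i) (P' i)) → ∀ i, (φ P).bundle i = (φ P').bundle i

variable [DecidableEq N]

/-- Truncation-proofness of a rule on the domain `D`. -/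
def RTP (D : Pref O → Prop) (ω : Allocation N O)
    (φ : (N → Pref O) → Allocation N O) : Prop :=
  ∀ P : N → Pref O, (∀ i, D (P i)) → ∀ i : N, ∀ p' : Pref O, D p' →
    TruncationStrategy (ω.bundle i) (P i) p' →
    (P i).weak ((φ P).bundle i) ((φ (Function.update P i p')).bundle i)

/-- Drop strategy-proofness of a rule on the domain `D`. -/
def RDSP (D : Pref O → Prop) (ω : Allocation N O)
    (φ : (N → Pref O) → Allocation N O) : Prop :=
  ∀ P : N → Pref O, (∀ i, D (P i)) → ∀ i : N, ∀ p' : Pref O, D p' →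
    DropStrategy (ω.bundle i) (P i) p' →
    (P i).weak ((φ P).bundle i) ((φ (Function.update P i p')).bundle i)

/-- Subset-drop strategy-proofness of a rule on the domain `D`. -/
def RSDSP (D : Pref O → Prop) (ω : Allocation N O)
    (φ : (N → Pref O) → Allocation N O) : Prop :=
  ∀ P : N → Pref O, (∀ i, D (P i)) → ∀ i : N, ∀ p' : Pref O, D p' →
    SubsetDropStrategy (ω.bundle i) (P i) p' →
    (P i).weak ((φ P).bundle i) ((φ (Function.update P i p')).bundle i)

/-- Worst-endowment lower bound on the conditionally lexicographic domain, formulated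
with conditional marginal preferences. -/
def RWELBCL (D : Pref O → Prop) (ω : Allocation N O)
    (φ : (N → Pref O) → Allocation N O) : Prop :=
  ∀ P : N → Pref O, (∀ i, D (P i)) → ∀ i, ∀ o ∈ (φ P).bundle i,
    ∀ w ∈ ω.bundle i,
      (∀ y ∈ ω.bundle i, CMargWeak (P i) ((φ P).bundle i) y w) →
      CMargWeak (P i) ((φ P).bundle i) o w

/-- Drop strategy-proofness on the conditionally lexicographic domain. -/
def RDSPCL (D : Pref O → Prop) (ω : Allocation N O)
    (φ : (N → Pref O) → Allocation N O) : Prop :=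
  ∀ P : N → Pref O, (∀ i, D (P i)) → ∀ i : N, ∀ p' : Pref O, D p' →
    DropStrategyCL (ω.bundle i) (P i) p' →
    (P i).weak ((φ P).bundle i) ((φ (Function.update P i p')).bundle i)

end Rules

/-- Agent `i`'s opportunity set under TTC when reporting `p`: the set of bundles
she may receive as others' (responsive) reports vary. -/
def Opp [Fintype O] [Nonempty O] [DecidableEq O] (ω : Allocation N O) (i : N)
    (p : Pref O) : Set (Finset O) :=
  {A | ∃ Q : N → Pref O, (∀ j, Responsive (Q j)) ∧ Q i = p ∧ TTC Q ω i = A}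


/-!
Agent 1 owns `a` and `b` and truly ranks `c`, `a`, `d`, `b`. Agents 2 and 3 own `c` and `d` and both
want `a` first. Reporting truthfully, agent 1 swaps `a` for `c` at once; agent 2 then leaves the
market, agent 3 keeps `d`, and agent 1 is left with `b`, for a total of `{b, c}`. If she drops `c`,
she keeps `a`, and now `b → d → c → b` is a trading cycle because agent 2 wants `b` and agent 3
wants `c`; it brings her `d`, for a total of `{a, d}`. Responsiveness does not determine how
`{a, d}` compares with `{b, c}`, so additive weights can be chosen that rank `{a, d}` higher.
-/

section PeriodicPoints

open Function Set

variable {α : Type*} {f : α → α} {s : Set α} {x : α}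

theorem mem_periodicPts_of_injOn (hs : s.Finite) (hf : MapsTo f s s) (hinj : InjOn f s)
    (hx : x ∈ s) : x ∈ periodicPts f := by
  have : Finite s := hs
  have hsemi : Semiconj ((↑) : s → α) (hf.restrict f s s) f := fun _ => rfl
  exact hsemi.mapsTo_periodicPts ((hf.restrict_inj.2 hinj).mem_periodicPts ⟨x, hx⟩)

theorem mem_of_mem_periodicPts_of_iterate_mem {k : ℕ} (hf : MapsTo f s s)
    (hx : x ∈ periodicPts f) (hk : f^[k] x ∈ s) : x ∈ s := by
  obtain ⟨m, hm, hper⟩ := hx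
  have hle : k ≤ m * k := Nat.le_mul_of_pos_left k hm
  have hreturn : f^[m * k - k] (f^[k] x) = x := by
    rw [← iterate_add_apply, Nat.sub_add_cancel hle]
    exact hper.mul_const k
  exact hreturn ▸ hf.iterate _ hk

end PeriodicPoints

section AdditivePreferences

theorem subsetSum_injective_of_signed_sum_eq_zero {ι M : Type*} [Fintype ι] [AddCommGroup M]
    {w : ι → M} (hw : ∀ ε : ι → ℤ, (∀ i, |ε i| ≤ 1) → ∑ i, ε i • w i = 0 → ∀ i, ε i = 0) :
    Function.Injective fun X : Finset ι => ∑ i ∈ X, w i := by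
  intro X Y hXY
  let χ : Finset ι → ι → ℤ := fun Z i => if i ∈ Z then 1 else 0
  have hsum (Z : Finset ι) : ∑ i, χ Z i • w i = ∑ i ∈ Z, w i := by simp [χ, ite_smul]
  have hχ : ∀ i, χ X i - χ Y i = 0 := by
    refine hw _ (fun i => ?_) ?_
    · by_cases hX : i ∈ X <;> by_cases hY : i ∈ Y <;> simp [χ, hX, hY]
    · simpa only [sub_smul, Finset.sum_sub_distrib, hsum, sub_eq_zero] using hXY
  ext i
  have hi := hχ i
  by_cases hX : i ∈ X <;> by_cases hY : i ∈ Y <;> simp_all [χ]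

theorem subsetSum_injective_fin_four {M : Type*} [AddCommGroup M] {a b c d : M}
    (h : ∀ x y z t : ℤ, |x| ≤ 1 → |y| ≤ 1 → |z| ≤ 1 → |t| ≤ 1 →
      x • a + y • b + z • c + t • d = 0 → x = 0 ∧ y = 0 ∧ z = 0 ∧ t = 0) :
    Function.Injective fun X : Finset (Fin 4) => ∑ o ∈ X, ![a, b, c, d] o := by
  refine subsetSum_injective_of_signed_sum_eq_zero fun ε hε hsum => ?_
  have hlinear : ε 0 • a + ε 1 • b + ε 2 • c + ε 3 • d = 0 := by
    simpa [Fin.sum_univ_four] using hsum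
  simpa [Fin.forall_fin_succ] using h _ _ _ _ (hε 0) (hε 1) (hε 2) (hε 3) hlinear

variable {M : Type*} [AddCommMonoid M] [LinearOrder M]

/-- The preference ranking bundles by their total weight. Injectivity of the subset sums is what
makes this a strict order on bundles. -/
def Pref.additive (w : O → M) (hw : Function.Injective fun X : Finset O => ∑ o ∈ X, w o) :
    Pref O where
  strict X Y := ∑ o ∈ Y, w o < ∑ o ∈ X, w o
  total X Y := by
    rcases lt_trichotomy (∑ o ∈ X, w o) (∑ o ∈ Y, w o) with h | h | h
    exacts [.inr (.inr h), .inr (.inl (hw h)), .inl h]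
  irrefl _ := lt_irrefl _
  trans _ _ _ hXY hYZ := hYZ.trans hXY

variable {w : O → M} {hw : Function.Injective fun X : Finset O => ∑ o ∈ X, w o}

theorem Pref.additive_strict {X Y : Finset O} :
    (Pref.additive w hw).strict X Y ↔ ∑ o ∈ Y, w o < ∑ o ∈ X, w o :=
  Iff.rfl

theorem Pref.additive_strict_singleton {x y : O} :
    (Pref.additive w hw).strict {x} {y} ↔ w y < w x := by
  simp only [additive_strict, Finset.sum_singleton]

theorem Pref.additive_weak_singleton {x y : O} :
    (Pref.additive w hw).weak {x} {y} ↔ w y ≤ w x := by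
  have heq : ({x} : Finset O) = {y} ↔ w x = w y :=
    hw.eq_iff.symm.trans (by simp only [Finset.sum_singleton])
  rw [weak, additive_strict_singleton, heq, le_iff_lt_or_eq, eq_comm (a := w x)]

theorem responsive_additive [IsOrderedCancelAddMonoid M] [DecidableEq O] :
    Responsive (Pref.additive w hw) := by
  intro X y z hy hz
  rw [Pref.additive_strict, Pref.additive_strict_singleton, Finset.sum_insert hy,
    Finset.sum_insert hz, add_lt_add_iff_right]

theorem Pref.best_eq [Nonempty O] {p : Pref O} {S : Finset O} {x : O} (hx : x ∈ S)
    (hbest : ∀ y ∈ S, p.weak {x} {y}) : p.best S = x := by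
  have hex : ∃ z ∈ S, ∀ y ∈ S, p.weak {z} {y} := ⟨x, hx, hbest⟩
  obtain ⟨hmem, hmax⟩ := hex.choose_spec
  rw [best, dif_pos hex]
  rcases hmax x hx with hlt | heq
  · rcases hbest _ hmem with hgt | heq
    · exact absurd (p.trans _ _ _ hlt hgt) (p.irrefl _)
    · exact (Finset.singleton_injective heq).symm
  · exact Finset.singleton_injective heq

theorem Pref.additive_best_eq [Nonempty O] {S : Finset O} {x : O} (hx : x ∈ S)
    (hbest : ∀ y ∈ S, w y ≤ w x) : (Pref.additive w hw).best S = x :=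
  best_eq hx fun y hy => additive_weak_singleton.2 (hbest y hy)

end AdditivePreferences

theorem Allocation.owner_eq {ω : Allocation N O} {o : O} {i : N} (h : o ∈ ω.bundle i) :
    ω.owner o = i := by
  by_contra hne
  exact ω.disj _ _ hne o (ω.cover o).choose_spec h

section TradingRounds

variable [Nonempty O]

/-- The functional graph of one TTC round, contracted to objects: `o` is sent to the object that
its owner points to when the objects in `S` remain. -/
noncomputable def pointing (pref : N → Pref O) (own : O → N) (S : Finset O) : O → O :=
  fun o => (pref (own o)).best S

variable {pref : N → Pref O} {own : O → N}

theorem pointing_singleton (x : O) : pointing pref own {x} = fun _ => x :=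
  funext fun _ => Pref.best_eq (Finset.mem_singleton_self x)
    fun _ hy => .inr (congrArg _ (Finset.mem_singleton.1 hy).symm)

variable [DecidableEq O]

theorem TTCaux_empty (n : ℕ) (i : N) : TTCaux pref own n ∅ i = ∅ := by
  cases n <;> simp [TTCaux]

theorem TTCaux_succ_of_trading_cycles {S C : Finset O} {g : O → O} {k : ℕ} (hS : S.Nonempty)
    (hg : pointing pref own S = g) (hCS : C ⊆ S) (hC : Set.MapsTo g C C) (hinj : Set.InjOn g C)
    (hk : Set.MapsTo g^[k] S C) (n : ℕ) (i : N) :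
    TTCaux pref own (n + 1) S i =
      (C.filter fun o => own o = i).image g ∪ TTCaux pref own n (S \ C) i := by
  have hcycles : (S.filter fun o => ∃ m : ℕ, 0 < m ∧ g^[m] o = o) = C := by
    ext o
    rw [Finset.mem_filter]
    constructor
    · rintro ⟨ho, hper⟩
      exact mem_of_mem_periodicPts_of_iterate_mem hC hper (hk ho)
    · exact fun ho => ⟨hCS ho, mem_periodicPts_of_injOn C.finite_toSet hC hinj ho⟩
  subst hg
  rw [TTCaux]
  simp only [if_pos hS]
  change Finset.image (pointing pref own S) _ ∪ TTCaux pref own n (S \ _) i = _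
  rw [← hcycles]
  congr!

end TradingRounds

section Manipulation

/-- Row `i` holds agent `i + 1`'s weights of `a, b, c, d` in the true profile. Agent 1 ranks
`c, a, d, b` and, since `6 + 4 > 1 + 8`, prefers `{a, d}` to `{b, c}`. -/
def trueWeight : Fin 3 → Fin 4 → ℤ := ![![6, 1, 8, 4], ![8, 4, 2, 1], ![8, 1, 4, 2]]

/-- The weights after agent 1's misreport, which drops `c` to the bottom of her ranking. -/
def dropWeight : Fin 3 → Fin 4 → ℤ := ![![8, 2, 1, 4], trueWeight 1, trueWeight 2]

theorem trueWeight_subsetSum_injective (i : Fin 3) :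
    Function.Injective fun X : Finset (Fin 4) => ∑ o ∈ X, trueWeight i o := by
  fin_cases i <;>
    exact subsetSum_injective_fin_four fun x y z t => by simp only [abs_le, smul_eq_mul]; omega

theorem dropWeight_subsetSum_injective (i : Fin 3) :
    Function.Injective fun X : Finset (Fin 4) => ∑ o ∈ X, dropWeight i o := by
  fin_cases i
  · exact subsetSum_injective_fin_four fun x y z t => by simp only [abs_le, smul_eq_mul]; omega
  · exact trueWeight_subsetSum_injective 1
  · exact trueWeight_subsetSum_injective 2

/-- The true preference profile. -/
def trueProfile (i : Fin 3) : Pref (Fin 4) :=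
  Pref.additive (trueWeight i) (trueWeight_subsetSum_injective i)

/-- The reported profile when agent 1 misreports and the others are truthful. -/
def dropProfile (i : Fin 3) : Pref (Fin 4) :=
  Pref.additive (dropWeight i) (dropWeight_subsetSum_injective i)

theorem update_trueProfile : Function.update trueProfile 0 (dropProfile 0) = dropProfile := by
  refine Function.update_eq_iff.2 ⟨rfl, fun i hi => ?_⟩
  fin_cases i
  exacts [absurd rfl hi, rfl, rfl]

theorem dropStrategy_dropProfile : DropStrategy {0, 1} (trueProfile 0) (dropProfile 0) := by
  simp only [DropStrategy, trueProfile, dropProfile, Pref.additive_strict_singleton]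
  exact ⟨2, by simp, by simp [trueWeight, dropWeight, Fin.forall_fin_succ],
    by simp [dropWeight, Fin.forall_fin_succ]⟩

/-- The initial owner of each of `a, b, c, d`. -/
def ownership : Fin 4 → Fin 3 := ![0, 0, 1, 2]

theorem owner_eq_ownership {ω : Allocation (Fin 3) (Fin 4)} (hω1 : ω.bundle 0 = {0, 1})
    (hω2 : ω.bundle 1 = {2}) (hω3 : ω.bundle 2 = {3}) : ω.owner = ownership := by
  ext1 o
  fin_cases o <;> apply Allocation.owner_eq <;> simp [ownership, hω1, hω2, hω3]

theorem pointing_trueProfile_univ :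
    pointing trueProfile ownership Finset.univ = ![2, 2, 0, 0] := by
  ext1 o
  fin_cases o <;> apply Pref.additive_best_eq <;>
    simp [trueWeight, ownership, Fin.forall_fin_succ]

theorem pointing_trueProfile_bd : pointing trueProfile ownership {1, 3} = ![3, 3, 1, 3] := by
  ext1 o
  fin_cases o <;> apply Pref.additive_best_eq <;> simp [trueWeight, ownership]

theorem pointing_dropProfile_univ :
    pointing dropProfile ownership Finset.univ = ![0, 0, 0, 0] := by
  ext1 o
  fin_cases o <;> apply Pref.additive_best_eq <;>
    simp [trueWeight, dropWeight, ownership, Fin.forall_fin_succ]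

theorem pointing_dropProfile_bcd :
    pointing dropProfile ownership {1, 2, 3} = ![3, 3, 1, 2] := by
  ext1 o
  fin_cases o <;> apply Pref.additive_best_eq <;> simp [trueWeight, dropWeight, ownership]

theorem TTC_trueProfile {ω : Allocation (Fin 3) (Fin 4)} (hω : ω.owner = ownership) :
    TTC trueProfile ω 0 = {2, 1} := by
  have hac : (Finset.univ : Finset (Fin 4)) \ {0, 2} = {1, 3} := by
    ext o
    fin_cases o <;> simp
  have hd : ({1, 3} : Finset (Fin 4)) \ {3} = {1} := by
    ext o
    fin_cases o <;> simp
  calc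
    TTC trueProfile ω 0 = TTCaux trueProfile ownership 5 Finset.univ 0 := by
      rw [TTC, hω, Fintype.card_fin]
    _ = {2} ∪ TTCaux trueProfile ownership 4 {1, 3} 0 := by
      rw [TTCaux_succ_of_trading_cycles (C := {0, 2}) (k := 1) Finset.univ_nonempty
        pointing_trueProfile_univ, hac]
      · simp only [Finset.filter_insert, Finset.filter_singleton]
        simp [ownership]
      all_goals simp [Set.MapsTo, Set.InjOn, Fin.forall_fin_succ]
    _ = {2} ∪ TTCaux trueProfile ownership 3 {1} 0 := by
      rw [TTCaux_succ_of_trading_cycles (C := {3}) (k := 1) (by simp)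
        pointing_trueProfile_bd, hd]
      · simp only [Finset.filter_singleton]
        simp [ownership]
      all_goals simp [Set.MapsTo]
    _ = {2, 1} := by
      rw [TTCaux_succ_of_trading_cycles (C := {1}) (k := 1) (by simp)
        (pointing_singleton 1), sdiff_self, Finset.bot_eq_empty, TTCaux_empty]
      · simp only [Finset.filter_singleton]
        simp [ownership]
      all_goals simp [Set.MapsTo]

theorem TTC_dropProfile {ω : Allocation (Fin 3) (Fin 4)} (hω : ω.owner = ownership) :
    TTC dropProfile ω 0 = {0, 3} := by
  have ha : (Finset.univ : Finset (Fin 4)) \ {0} = {1, 2, 3} := by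
    ext o
    fin_cases o <;> simp
  calc
    TTC dropProfile ω 0 = TTCaux dropProfile ownership 5 Finset.univ 0 := by
      rw [TTC, hω, Fintype.card_fin]
    _ = {0} ∪ TTCaux dropProfile ownership 4 {1, 2, 3} 0 := by
      rw [TTCaux_succ_of_trading_cycles (C := {0}) (k := 1) Finset.univ_nonempty
        pointing_dropProfile_univ, ha]
      · simp only [Finset.filter_singleton]
        simp [ownership]
      all_goals simp [Set.MapsTo, Fin.forall_fin_succ]
    _ = {0, 3} := by
      rw [TTCaux_succ_of_trading_cycles (C := {1, 2, 3}) (k := 0) (by simp)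
        pointing_dropProfile_bcd, sdiff_self, Finset.bot_eq_empty, TTCaux_empty]
      · simp only [Finset.filter_insert, Finset.filter_singleton]
        simp [ownership]
      all_goals simp [Set.MapsTo, Set.InjOn]

end Manipulation

/-- TTC fails drop strategy-proofness on the responsive domain: with
N = {1,2,3}, O = {a,b,c,d} (encoded as `Fin 3`, `Fin 4` with a,b,c,d = 0,1,2,3) and
ω = ({a,b},{c},{d}), some agent can profitably deviate via a drop strategy. -/
theorem stmt10 (ω : Allocation (Fin 3) (Fin 4))
    (hω1 : ω.bundle 0 = {0, 1}) (hω2 : ω.bundle 1 = {2}) (hω3 : ω.bundle 2 = {3}) :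
    ∃ (P : Fin 3 → Pref (Fin 4)) (p' : Pref (Fin 4)),
      (∀ i, Responsive (P i)) ∧ Responsive p' ∧
      DropStrategy (ω.bundle 0) (P 0) p' ∧
      (P 0).strict (TTC (Function.update P 0 p') ω 0) (TTC P ω 0) := by
  have hω := owner_eq_ownership hω1 hω2 hω3
  refine ⟨trueProfile, dropProfile 0, fun _ => responsive_additive, responsive_additive,
    hω1 ▸ dropStrategy_dropProfile, ?_⟩
  rw [update_trueProfile, TTC_dropProfile hω, TTC_trueProfile hω, trueProfile, Pref.additive_strict]
  simp [trueWeight]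

end Realloc
end

section
/- For every profile P in the conditionally lexicographic domain 𝒞ℒ, an allocation is individual-good efficient at P if and only if it is Pareto efficient at P. -/
attribute [local instance] Classical.propDecidable

namespace Realloc

variable {N O : Type}

/-!
If a bundle `V` beats `M` for a conditionally lexicographic preference, then the conditionally best
object `x` of `V ∆ M` given `V ∩ M` lies in `V \ M`, and already `insert x (V ∩ M)` beats `M`. By
monotonicity, receiving `x` in exchange for any single `o ∈ M \ V` therefore improves on `M`.

Suppose `ν` Pareto dominates `μ`, and call an object displaced if its `μ`-owner loses it in `ν`. The
owner of a displaced object is strictly better off in `ν`, and the object `x` she targets is again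
displaced. By finiteness, `o ↦ x (owner o)` has a cycle of displaced objects, which is a Pareto
improving trading cycle. Conversely, carrying out a Pareto improving trading cycle amounts to
permuting the objects, and yields an allocation that dominates `μ`.
-/

section Cycles

open Function

variable {α : Type*} {f : α → α}

theorem exists_mem_periodicPts_of_mapsTo {s : Set α} (hs : s.Finite) (hne : s.Nonempty)
    (hf : Set.MapsTo f s s) : ∃ x ∈ s, x ∈ periodicPts f := by
  obtain ⟨a, ha⟩ := hne
  have hmem : ∀ n, f^[n] a ∈ s := fun n => hf.iterate n ha
  obtain ⟨m, n, hlt, heq⟩ := hs.exists_lt_map_eq_of_forall_mem hmem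
  refine ⟨f^[m] a, hmem m, mk_mem_periodicPts (Nat.sub_pos_of_lt hlt) ?_⟩
  calc f^[n - m] (f^[m] a) = f^[n] a := by rw [← iterate_add_apply, Nat.sub_add_cancel hlt.le]
    _ = f^[m] a := heq.symm

theorem iterate_fin_val_add_one {x : α} {k : ℕ} (hx : IsPeriodicPt f (k + 1) x) (ℓ : Fin (k + 1)) :
    f^[(ℓ + 1 : Fin (k + 1))] x = f (f^[ℓ] x) := by
  rw [← iterate_succ_apply' f, ← hx.iterate_mod_apply (ℓ + 1)]
  simp [Fin.val_add]

theorem exists_injective_cycle_of_mapsTo {s : Set α} (hs : s.Finite) (hne : s.Nonempty)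
    (hf : Set.MapsTo f s s) : ∃ (k : ℕ) (c : Fin (k + 1) → α),
      Injective c ∧ (∀ ℓ, c ℓ ∈ s) ∧ ∀ ℓ, c (ℓ + 1) = f (c ℓ) := by
  obtain ⟨x, hxs, hx⟩ := exists_mem_periodicPts_of_mapsTo hs hne hf
  obtain ⟨k, hk⟩ := Nat.exists_eq_add_one.2 (minimalPeriod_pos_of_mem_periodicPts hx)
  have hper : IsPeriodicPt f (k + 1) x := hk ▸ isPeriodicPt_minimalPeriod f x
  have hinj : (Set.Iio (k + 1)).InjOn (f^[·] x) := hk ▸ iterate_injOn_Iio_minimalPeriod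
  exact ⟨k, fun ℓ => f^[ℓ] x, fun ℓ m h => Fin.ext (hinj ℓ.isLt m.isLt h),
    fun ℓ => hf.iterate ℓ hxs, iterate_fin_val_add_one hper⟩

end Cycles

section Preferences

theorem Pref.weak.trans_strict {p : Pref O} {X Y Z : Finset O} (hXY : p.weak X Y)
    (hYZ : p.strict Y Z) : p.strict X Z := by
  obtain h | rfl := hXY
  exacts [p.trans _ _ _ h hYZ, hYZ]

theorem Pref.weak.not_strict {p : Pref O} {X Y : Finset O} (h : p.weak X Y) : ¬ p.strict Y X :=
  fun h' => p.irrefl _ (h.trans_strict h')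

variable [DecidableEq O] {p : Pref O}

theorem Pref.monot_of_strict_insert (h : ∀ Y a, a ∉ Y → p.strict (insert a Y) Y) : Monot p := by
  suffices h_union : ∀ Y D, p.weak (Y ∪ D) Y by
    intro X Y hYX
    simpa only [Finset.union_eq_right.2 hYX] using h_union Y X
  intro Y D
  induction D using Finset.induction_on with
  | empty => exact .inr (Finset.union_empty Y)
  | insert a D _ ih =>
    rw [Finset.union_insert]
    by_cases ha : a ∈ Y ∪ D
    · rwa [Finset.insert_eq_of_mem ha]
    · obtain h_strict | h_eq := ih
      · exact .inl (p.trans _ _ _ (h _ _ ha) h_strict)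
      · exact .inl (by simpa only [h_eq] using h _ _ ha)

theorem CondLex.strict_insert (hp : CondLex p) {Y : Finset O} {a : O} (ha : a ∉ Y) :
    p.strict (insert a Y) Y := by
  obtain ⟨x, ⟨hx, hbest⟩, -⟩ :=
    hp {a} Y (Finset.disjoint_singleton_left.2 ha) (Finset.singleton_nonempty a)
  obtain rfl := Finset.mem_singleton.1 hx
  simpa only [Finset.union_empty] using hbest ∅ (Finset.empty_subset _)

theorem CondLex.monot (hp : CondLex p) : Monot p :=
  Pref.monot_of_strict_insert fun _ _ => hp.strict_insert

theorem CondLex.exists_strict_insert_inter (hp : CondLex p) {V M : Finset O} (h : p.strict V M) :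
    ∃ x ∈ V \ M, p.strict (insert x (V ∩ M)) M := by
  have hne : V ≠ M := by
    rintro rfl
    exact p.irrefl V h
  obtain ⟨x, ⟨hx, hbest⟩, -⟩ := hp (symmDiff V M) (V ∩ M) (disjoint_symmDiff_inf V M)
    (Finset.symmDiff_nonempty.2 hne)
  obtain ⟨hxV, hxM⟩ | ⟨hxM, hxV⟩ := Finset.mem_symmDiff.1 hx
  · refine ⟨x, Finset.mem_sdiff.2 ⟨hxV, hxM⟩, ?_⟩
    have hM : V ∩ M ∪ M \ V = M := by grind
    simpa only [hM] using hbest (M \ V) (by grind [Finset.mem_symmDiff])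
  · have hV : V ∩ M ∪ V \ M = V := by grind
    have h_strict : p.strict (insert x (V ∩ M)) V := by
      simpa only [hV] using hbest (V \ M) (by grind [Finset.mem_symmDiff])
    have h_weak : p.weak M (insert x (V ∩ M)) := hp.monot _ _ (by grind)
    exact absurd h (Pref.weak.not_strict (.inl (h_weak.trans_strict h_strict)))

theorem CondLex.exists_strict_swap (hp : CondLex p) {V M : Finset O} (h : p.strict V M) :
    ∃ x ∈ V \ M, ∀ o ∈ M \ V, p.strict ((insert x M).erase o) M := by
  obtain ⟨x, hx, h_strict⟩ := hp.exists_strict_insert_inter h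
  refine ⟨x, hx, fun o ho => ?_⟩
  have hsub : insert x (V ∩ M) ⊆ (insert x M).erase o := by grind
  exact (hp.monot _ _ hsub).trans_strict h_strict

end Preferences

namespace Allocation

theorem eq_of_mem (μ : Allocation N O) {i j : N} {o : O} (hi : o ∈ μ.bundle i)
    (hj : o ∈ μ.bundle j) : i = j := by
  by_contra hij
  exact μ.disj i j hij o hi hj

theorem mem_bundle_owner (μ : Allocation N O) (o : O) : o ∈ μ.bundle (μ.owner o) :=
  (μ.cover o).choose_spec

theorem notMem_bundle_owner_of_mem_of_notMem (μ ν : Allocation N O) {i : N} {o : O}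
    (hν : o ∈ ν.bundle i) (hμ : o ∉ μ.bundle i) : o ∉ ν.bundle (μ.owner o) := by
  intro ho
  obtain rfl := ν.eq_of_mem hν ho
  exact hμ (μ.mem_bundle_owner o)

/-- The allocation obtained from `μ` by replacing each object `o` by `σ o`, in whichever bundle it
lies. Permuting the objects of a trading cycle carries out the trade. -/
def permute (μ : Allocation N O) (σ : Equiv.Perm O) : Allocation N O where
  bundle i := (μ.bundle i).map σ.toEmbedding
  nonempty i := (μ.nonempty i).map
  disj i j hij o hi hj := by
    rw [Finset.mem_map_equiv] at hi hj
    exact μ.disj i j hij _ hi hj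
  cover o := by
    obtain ⟨i, hi⟩ := μ.cover (σ.symm o)
    exact ⟨i, Finset.mem_map_equiv.2 hi⟩

theorem bundle_permute_of_forall_eq (μ : Allocation N O) {σ : Equiv.Perm O} {i : N}
    (hσ : ∀ o ∈ μ.bundle i, σ o = o) : (μ.permute σ).bundle i = μ.bundle i := by
  calc (μ.bundle i).map σ.toEmbedding = (μ.bundle i).image σ := Finset.map_eq_image _ _
    _ = (μ.bundle i).image id := Finset.image_congr hσ
    _ = μ.bundle i := Finset.image_id

theorem bundle_permute_of_forall_ne_eq [DecidableEq O] (μ : Allocation N O) {σ : Equiv.Perm O}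
    {i : N} {a : O} (ha : a ∈ μ.bundle i) (hσ : ∀ o ∈ μ.bundle i, o ≠ a → σ o = o) :
    (μ.permute σ).bundle i = insert (σ a) ((μ.bundle i).erase a) := by
  have hfix : ((μ.bundle i).erase a).image σ = ((μ.bundle i).erase a).image id :=
    Finset.image_congr fun o ho => hσ o (Finset.mem_of_mem_erase ho) (Finset.ne_of_mem_erase ho)
  calc (μ.bundle i).map σ.toEmbedding
      = (insert a ((μ.bundle i).erase a)).image σ := by
        rw [Finset.insert_erase ha]
        exact Finset.map_eq_image _ _
    _ = insert (σ a) ((μ.bundle i).erase a) := by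
        rw [Finset.image_insert, hfix, Finset.image_id]

section Trade

variable {ι : Type*} (μ : Allocation N O) (τ : Equiv.Perm ι) {obj : ι ↪ O} {ag : ι → N}

theorem bundle_permute_viaEmbedding_of_forall_ne (hmem : ∀ ℓ, obj ℓ ∈ μ.bundle (ag ℓ)) {i : N}
    (hi : ∀ ℓ, ag ℓ ≠ i) : (μ.permute (τ.viaEmbedding obj)).bundle i = μ.bundle i := by
  refine μ.bundle_permute_of_forall_eq fun o ho => τ.viaEmbedding_apply_of_notMem obj o ?_
  rintro ⟨ℓ, rfl⟩
  exact hi ℓ (μ.eq_of_mem (hmem ℓ) ho)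

theorem bundle_permute_viaEmbedding [DecidableEq O] (hag : Function.Injective ag)
    (hmem : ∀ ℓ, obj ℓ ∈ μ.bundle (ag ℓ)) (ℓ : ι) :
    (μ.permute (τ.viaEmbedding obj)).bundle (ag ℓ) =
      insert (obj (τ ℓ)) ((μ.bundle (ag ℓ)).erase (obj ℓ)) := by
  rw [← τ.viaEmbedding_apply obj ℓ]
  refine μ.bundle_permute_of_forall_ne_eq (hmem ℓ) fun o ho hne =>
    τ.viaEmbedding_apply_of_notMem obj o ?_
  rintro ⟨m, rfl⟩
  exact hne (congrArg obj (hag (μ.eq_of_mem (hmem m) ho)))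

end Trade

end Allocation

section Efficiency

variable [DecidableEq O] {P : N → Pref O} {μ : Allocation N O}

theorem ParetoImprovingCycleAt.exists_paretoDominates (hP : ∀ i, Monot (P i))
    (h : ParetoImprovingCycleAt P μ.bundle) :
    ∃ ν : Allocation N O, ParetoDominates P ν.bundle μ.bundle := by
  obtain ⟨k, obj, ag, hobj, hag, hmem, hstrict⟩ := h
  -- For `k = 0` the cycle would be an agent trading an object for itself, that is, discarding it.
  have hne : ∀ ℓ, obj (ℓ + 1) ≠ obj ℓ := by
    intro ℓ heq
    refine (hP (ag ℓ) _ _ ?_).not_strict (hstrict ℓ)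
    rw [heq, Finset.insert_eq_of_mem (hmem ℓ)]
    exact Finset.erase_subset _ _
  let ν := μ.permute ((Equiv.addRight (1 : Fin (k + 1))).viaEmbedding ⟨obj, hobj⟩)
  have hgain : ∀ ℓ, (P (ag ℓ)).strict (ν.bundle (ag ℓ)) (μ.bundle (ag ℓ)) := by
    intro ℓ
    have hν : ν.bundle (ag ℓ) = insert (obj (ℓ + 1)) ((μ.bundle (ag ℓ)).erase (obj ℓ)) :=
      μ.bundle_permute_viaEmbedding _ hag hmem ℓ
    rw [hν, ← Finset.erase_insert_of_ne (hne ℓ)]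
    exact hstrict ℓ
  refine ⟨ν, fun i => ?_, ag 0, hgain 0⟩
  by_cases hi : ∃ ℓ, ag ℓ = i
  · obtain ⟨ℓ, rfl⟩ := hi
    exact .inl (hgain ℓ)
  · exact .inr (μ.bundle_permute_viaEmbedding_of_forall_ne _ hmem (not_exists.1 hi))

theorem ParetoDominates.paretoImprovingCycleAt [Finite O] (hP : ∀ i, CondLex (P i))
    {ν : Allocation N O} (h : ParetoDominates P ν.bundle μ.bundle) :
    ParetoImprovingCycleAt P μ.bundle := by
  obtain ⟨hweak, j, hj⟩ := h
  have : Nonempty O := (μ.nonempty j).to_subtype.map Subtype.val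
  have hswap : ∀ i, (P i).strict (ν.bundle i) (μ.bundle i) → ∃ x ∈ ν.bundle i \ μ.bundle i,
      ∀ o ∈ μ.bundle i \ ν.bundle i,
        (P i).strict ((insert x (μ.bundle i)).erase o) (μ.bundle i) :=
    fun i => (hP i).exists_strict_swap
  choose! target htarget hgain using hswap
  let displaced : Set O := {o | o ∉ ν.bundle (μ.owner o)}
  have htarget_displaced : ∀ i, (P i).strict (ν.bundle i) (μ.bundle i) →
      target i ∈ displaced := fun i hi =>
    have hx := Finset.mem_sdiff.1 (htarget i hi)
    μ.notMem_bundle_owner_of_mem_of_notMem ν hx.1 hx.2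
  have hstrict : ∀ o ∈ displaced,
      (P (μ.owner o)).strict (ν.bundle (μ.owner o)) (μ.bundle (μ.owner o)) := fun o ho =>
    (hweak (μ.owner o)).resolve_right fun heq => ho (heq ▸ μ.mem_bundle_owner o)
  obtain ⟨k, obj, hobj, hdisplaced, hnext⟩ :=
    exists_injective_cycle_of_mapsTo (f := fun o => target (μ.owner o)) displaced.toFinite
      ⟨target j, htarget_displaced j hj⟩
      fun o ho => htarget_displaced (μ.owner o) (hstrict o ho)
  refine ⟨k, obj, fun ℓ => μ.owner (obj ℓ), hobj, fun ℓ m hℓm => ?_,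
    fun ℓ => μ.mem_bundle_owner (obj ℓ), fun ℓ => ?_⟩
  · have htargets : obj (ℓ + 1) = obj (m + 1) := by
      rw [hnext, hnext]
      exact congrArg target hℓm
    exact add_right_cancel (hobj htargets)
  · rw [hnext]
    exact hgain _ (hstrict _ (hdisplaced ℓ)) _
      (Finset.mem_sdiff.2 ⟨μ.mem_bundle_owner _, hdisplaced ℓ⟩)

end Efficiency

/-- On the conditionally lexicographic domain, an allocation is
individual-good efficient iff it is Pareto efficient. -/
theorem stmt15 {N O : Type} [Fintype N] [Fintype O] [DecidableEq N] [DecidableEq O]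
    (hN : 2 ≤ Fintype.card N) (hNO : Fintype.card N ≤ Fintype.card O) :
    ∀ P : N → Pref O, (∀ i, CondLex (P i)) → ∀ μ : Allocation N O,
      (IGEat P μ.bundle ↔ ParetoEffAt P μ.bundle) := by
  intro P hP μ
  constructor
  · intro hIGE ν hν
    exact hIGE (hν.paretoImprovingCycleAt hP)
  · intro hPE hcycle
    obtain ⟨ν, hν⟩ := hcycle.exists_paretoDominates fun i => (hP i).monot
    exact hPE ν hν

end Realloc
end
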